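/- arXiv:1503.07211 — 2 statements merged into one kernel-verified Lean document; each statement's English description precedes it below -/
import Mathlib

section
/- Let n ≥ 2 and let m be a natural number with m ≥ 2^n − 1. Then there exists a Markov kernel R in the closure of F_{m,n} such that the set { p^⊤R : p in the closure of E_m } equals the whole simplex Δ_n of probability distributions on {0,1}^n. -/
open Finset

/-- The logistic sigmoid function `σ(a) = 1/(1+exp(-a))`. -/
noncomputable def sigmoid (a : ℝ) : ℝ := 1 / (1 + Real.exp (-a))

/-- Real value of a bit. -/
def bval (b : Bool) : ℝ := if b then 1 else 0

/-- The set `F_{k,m}` of Markov kernels representable by a feedforward layer of `m`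
sigmoid stochastic units with `k` binary inputs. -/
noncomputable def Fset (k m : ℕ) : Set ((Fin k → Bool) → (Fin m → Bool) → ℝ) :=
  {P | ∃ (V : Fin m → Fin k → ℝ) (c : Fin m → ℝ), ∀ y z,
    P y z = ∏ j, (if z j then sigmoid ((∑ i, V j i * bval (y i)) + c j)
                  else 1 - sigmoid ((∑ i, V j i * bval (y i)) + c j))}

/-- `Δ_{k,n}`: all Markov kernels from `{0,1}^k` to distributions on `{0,1}^n`. -/
def markovKernels (k n : ℕ) : Set ((Fin k → Bool) → (Fin n → Bool) → ℝ) :=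
  {P | (∀ y x, 0 ≤ P y x) ∧ ∀ y, ∑ x, P y x = 1}

/-- Composition of Markov kernels: `(R ∘ Q)(x|y) = ∑_z Q(z|y) R(x|z)`. -/
noncomputable def kcomp {k m n : ℕ} (R : (Fin m → Bool) → (Fin n → Bool) → ℝ)
    (Q : (Fin k → Bool) → (Fin m → Bool) → ℝ) : (Fin k → Bool) → (Fin n → Bool) → ℝ :=
  fun y x => ∑ z, Q y z * R z x

/-- `Δ_n`: probability distributions on `{0,1}^n`. -/
def simplex (n : ℕ) : Set ((Fin n → Bool) → ℝ) :=
  {p | (∀ x, 0 ≤ p x) ∧ ∑ x, p x = 1}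

/-- `Δ_n^+`: strictly positive probability distributions on `{0,1}^n`. -/
def simplexPos (n : ℕ) : Set ((Fin n → Bool) → ℝ) :=
  {p | (∀ x, 0 < p x) ∧ ∑ x, p x = 1}

/-- Mixture `p^⊤ R` of the rows of a kernel `R` with weights `p`. -/
noncomputable def mix {m n : ℕ} (p : (Fin m → Bool) → ℝ)
    (R : (Fin m → Bool) → (Fin n → Bool) → ℝ) : (Fin n → Bool) → ℝ :=
  fun x => ∑ z, p z * R z x

/-- `E_m`: strictly positive product distributions on `{0,1}^m`, where the `j`-th bit
is `0` with probability `q j ∈ (0,1)`. -/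
def Eset (m : ℕ) : Set ((Fin m → Bool) → ℝ) :=
  {p | ∃ q : Fin m → ℝ, (∀ j, q j ∈ Set.Ioo (0:ℝ) 1) ∧
    ∀ z, p z = ∏ j, (if z j then 1 - q j else q j)}

/-- Integer value of a binary vector (bit `i` has weight `2^i`). -/
def intval {k : ℕ} (y : Fin k → Bool) : ℕ := ∑ i, if y i then 2 ^ (i : ℕ) else 0

/-- `l(z)`: position (1-based) of the largest nonzero entry of `z`, and `0` if `z = 0`. -/
def lidx {N : ℕ} (z : Fin N → Bool) : ℕ :=
  (Finset.univ.filter (fun j => z j = true)).sup (fun j => (j : ℕ) + 1)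

/-- `bin_n(l)`: the `n`-bit binary representation of `l`. -/
def binVec (n l : ℕ) : Fin n → Bool := fun i => Nat.testBit l (i : ℕ)

/-- Point measure at `x ∈ {0,1}^n`. -/
noncomputable def deltaAt {n : ℕ} (x : Fin n → Bool) : (Fin n → Bool) → ℝ :=
  fun x' => if x' = x then 1 else 0

/-!
Let `l(z)` be the position of the last nonzero bit of `z`. For every `g : ℕ → {0,1}^n` the
deterministic kernel `z ↦ δ_{g(l(z))}` is a limit of sigmoid layers: each output bit `s(l(z))` is a
linear threshold function of `z`, because the weight of bit `m + 1` can be chosen to outweigh all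
earlier bits together, and scaling the weights of a threshold unit to infinity makes it
deterministic.

It remains to let `l(z)` have an arbitrary law `a` on `{0, …, m}` when `z` is drawn from a product
distribution. As `l(z) < j` says that the bits `j, …, m` vanish, it suffices that bit `j` is `0`
with probability `(a 0 + ⋯ + a (j - 1)) / (a 0 + ⋯ + a j)`.
-/

open Filter Topology

section ProductDistributions

variable {m : ℕ}

/-- The product distribution on `{0,1}^m` whose `j`-th bit is `0` with probability `q j`. It is
defined for all real `q`, so that limits can be taken in the parameter. -/
def productDist (q : Fin m → ℝ) (z : Fin m → Bool) : ℝ :=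
  ∏ j, if z j then 1 - q j else q j

lemma continuous_productDist : Continuous (productDist (m := m)) := by
  refine continuous_pi fun z => continuous_finsetProd _ fun j _ => ?_
  split_ifs <;> fun_prop

lemma sum_productDist (q : Fin m → ℝ) : ∑ z, productDist q z = 1 := by
  have h := Finset.sum_prod_piFinset Finset.univ fun j (b : Bool) => if b then 1 - q j else q j
  rw [Fintype.piFinset_univ] at h
  simpa [productDist] using h

lemma productDist_mem_simplex {q : Fin m → ℝ} (hq : ∀ j, q j ∈ Set.Icc (0 : ℝ) 1) :
    productDist q ∈ simplex m := by
  refine ⟨fun z => Finset.prod_nonneg fun j _ => ?_, sum_productDist q⟩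
  split_ifs
  exacts [sub_nonneg.2 (hq j).2, (hq j).1]

lemma deltaAt_eq_productDist (x : Fin m → Bool) :
    deltaAt x = productDist fun j => if x j then 0 else 1 := by
  ext z
  have hfactor (j : Fin m) : (if z j then 1 - (if x j then 0 else 1) else if x j then 0 else 1) =
      if z j = x j then (1 : ℝ) else 0 := by
    cases z j <;> cases x j <;> simp
  simp [deltaAt, productDist, hfactor, Finset.prod_ite_zero, funext_iff]

lemma Eset_eq_image_productDist :
    Eset m = productDist '' Set.univ.pi fun _ => Set.Ioo (0 : ℝ) 1 := by
  ext p
  simp only [Eset, Set.mem_ofPred_eq, Set.mem_image, Set.mem_univ_pi, funext_iff, productDist,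
    eq_comm]

lemma closure_Eset :
    closure (Eset m) = productDist '' Set.univ.pi fun _ => Set.Icc (0 : ℝ) 1 := by
  have hcube : closure (Set.univ.pi fun _ : Fin m => Set.Ioo (0 : ℝ) 1) =
      Set.univ.pi fun _ => Set.Icc 0 1 := by
    simp only [closure_pi_set, closure_Ioo zero_ne_one]
  have hcompact : IsCompact (Set.univ.pi fun _ : Fin m => Set.Icc (0 : ℝ) 1) :=
    isCompact_univ_pi fun _ => isCompact_Icc
  rw [Eset_eq_image_productDist, ← hcube]
  exact (image_closure_of_isCompact (hcube ▸ hcompact) continuous_productDist.continuousOn).symm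

end ProductDistributions

section Kernels

variable {k m n : ℕ}

lemma deltaAt_mem_simplex (x : Fin n → Bool) : deltaAt x ∈ simplex n := by
  refine ⟨fun x' => ?_, by simp [deltaAt]⟩
  unfold deltaAt
  split_ifs <;> norm_num

lemma deltaAt_comp_mem_markovKernels (f : (Fin k → Bool) → Fin n → Bool) :
    (fun y => deltaAt (f y)) ∈ markovKernels k n :=
  ⟨fun y => (deltaAt_mem_simplex (f y)).1, fun y => (deltaAt_mem_simplex (f y)).2⟩

lemma mix_mem_simplex {p : (Fin m → Bool) → ℝ} {R : (Fin m → Bool) → (Fin n → Bool) → ℝ}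
    (hp : p ∈ simplex m) (hR : R ∈ markovKernels m n) : mix p R ∈ simplex n := by
  refine ⟨fun x => Finset.sum_nonneg fun z _ => mul_nonneg (hp.1 z) (hR.1 z x), ?_⟩
  calc ∑ x, ∑ z, p z * R z x = ∑ z, p z * ∑ x, R z x := by
        rw [Finset.sum_comm]
        simp only [Finset.mul_sum]
    _ = 1 := by simp only [hR.2, mul_one, hp.2]

end Kernels

section ThresholdFunctions

variable {k n : ℕ}

/-- The input `v ⬝ y + c` that a unit with weights `v` and bias `c` receives from the bits `y`. -/
def preactivation (v : Fin k → ℝ) (c : ℝ) (y : Fin k → Bool) : ℝ :=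
  ∑ i, v i * bval (y i) + c

/-- `f` is a linear threshold function: some affine form is positive where `f` is true and negative
where `f` is false. Strict signs on both sides make the limit of a rescaled sigmoid unit
deterministic. -/
def IsLinearThreshold (f : (Fin k → Bool) → Bool) : Prop :=
  ∃ v c, ∀ y, if f y then 0 < preactivation v c y else preactivation v c y < 0

lemma preactivation_const_mul (t : ℝ) (v : Fin k → ℝ) (c : ℝ) (y : Fin k → Bool) :
    preactivation (fun i => t * v i) (t * c) y = t * preactivation v c y := by
  simp only [preactivation, mul_add, Finset.mul_sum, mul_assoc]

lemma preactivation_snoc (v : Fin k → ℝ) (w c : ℝ) (y : Fin k → Bool) (b : Bool) :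
    preactivation (Fin.snoc (α := fun _ => ℝ) v w) c (Fin.snoc (α := fun _ => Bool) y b) =
      preactivation v c y + w * bval b := by
  simp only [preactivation, Fin.sum_univ_castSucc, Fin.snoc_castSucc, Fin.snoc_last]
  ring

lemma productDist_sigmoid_mem_Fset (V : Fin n → Fin k → ℝ) (c : Fin n → ℝ) :
    (fun y => productDist fun j => 1 - sigmoid (preactivation (V j) (c j) y)) ∈ Fset k n :=
  ⟨V, c, fun y z => by simp only [productDist, preactivation, sub_sub_cancel]⟩

lemma sigmoid_eq_real_sigmoid : sigmoid = Real.sigmoid :=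
  funext fun _ => one_div _

lemma tendsto_sigmoid_mul_atTop_of_pos {a : ℝ} (ha : 0 < a) :
    Tendsto (fun t => sigmoid (t * a)) atTop (𝓝 1) := by
  rw [sigmoid_eq_real_sigmoid]
  exact Real.tendsto_sigmoid_atTop.comp (tendsto_id.atTop_mul_const ha)

lemma tendsto_sigmoid_mul_atTop_of_neg {a : ℝ} (ha : a < 0) :
    Tendsto (fun t => sigmoid (t * a)) atTop (𝓝 0) := by
  rw [sigmoid_eq_real_sigmoid]
  exact Real.tendsto_sigmoid_atBot.comp (tendsto_id.atTop_mul_const_of_neg ha)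

theorem deltaAt_comp_mem_closure_Fset {f : (Fin k → Bool) → Fin n → Bool}
    (hf : ∀ j, IsLinearThreshold fun y => f y j) :
    (fun y => deltaAt (f y)) ∈ closure (Fset k n) := by
  choose V c hVc using hf
  have hlim (y : Fin k → Bool) (j : Fin n) :
      Tendsto (fun t => 1 - sigmoid (t * preactivation (V j) (c j) y)) atTop
        (𝓝 (if f y j then 0 else 1)) := by
    have hsign := hVc j y
    split_ifs at hsign ⊢
    · simpa using (tendsto_sigmoid_mul_atTop_of_pos hsign).const_sub 1
    · simpa using (tendsto_sigmoid_mul_atTop_of_neg hsign).const_sub 1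
  refine mem_closure_of_tendsto (b := atTop)
    (f := fun t y => productDist fun j => 1 - sigmoid (t * preactivation (V j) (c j) y))
    (tendsto_pi_nhds.2 fun y => ?_) (Eventually.of_forall fun t => ?_)
  · rw [deltaAt_eq_productDist]
    exact (continuous_productDist.tendsto _).comp (tendsto_pi_nhds.2 (hlim y))
  · simp only [← preactivation_const_mul]
    exact productDist_sigmoid_mem_Fset _ _

end ThresholdFunctions

section LastNonzeroBit

variable {m n : ℕ}

lemma lidx_le (z : Fin m → Bool) : lidx z ≤ m :=
  Finset.sup_le fun j _ => j.isLt

lemma lidx_snoc (z : Fin m → Bool) (b : Bool) :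
    lidx (Fin.snoc (α := fun _ => Bool) z b) = if b then m + 1 else lidx z := by
  have hsplit : lidx (Fin.snoc (α := fun _ => Bool) z b) =
      max (if b then m + 1 else 0) (lidx z) := by
    cases b <;> simp [lidx, Fin.univ_castSuccEmb, Finset.filter_insert, Finset.filter_map,
      Finset.sup_map, Function.comp_def]
  have hle := lidx_le z
  rw [hsplit]
  split_ifs <;> omega

theorem isLinearThreshold_comp_lidx (s : ℕ → Bool) :
    IsLinearThreshold fun z : Fin m → Bool => s (lidx z) := by
  induction m with
  | zero =>
    refine ⟨0, if s 0 then 1 else -1, fun z => ?_⟩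
    cases hs : s 0 <;> simp [preactivation, lidx, hs]
  | succ m ih =>
    obtain ⟨v, c, hvc⟩ := ih
    obtain ⟨w, hw⟩ : ∃ w, ∀ z, |preactivation v c z| < w :=
      (eventually_all.2 fun z => eventually_gt_atTop |preactivation v c z|).exists
    refine ⟨Fin.snoc (α := fun _ => ℝ) v (if s (m + 1) then w else -w), c, fun z => ?_⟩
    induction z using Fin.snocCases with | _ z b => ?_
    obtain ⟨hlow, hupp⟩ := abs_lt.1 (hw z)
    simp only [preactivation_snoc, lidx_snoc]
    cases b
    · simpa [bval] using hvc z
    · cases hs : s (m + 1) <;>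
        simp only [hs, bval, if_true, Bool.false_eq_true, if_false, mul_one] <;> linarith

lemma sum_bool_snoc {M : Type*} [AddCommMonoid M] (f : (Fin (m + 1) → Bool) → M) :
    ∑ z, f z = ∑ z, (f (Fin.snoc z true) + f (Fin.snoc z false)) := by
  rw [← (Fin.snocEquiv fun _ : Fin (m + 1) => Bool).sum_comp, Fintype.sum_prod_type_right]
  exact Finset.sum_congr rfl fun z _ => Fintype.sum_bool _

lemma productDist_snoc (q : Fin m → ℝ) (r : ℝ) (z : Fin m → Bool) (b : Bool) :
    productDist (Fin.snoc (α := fun _ => ℝ) q r) (Fin.snoc (α := fun _ => Bool) z b) =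
      productDist q z * if b then 1 - r else r := by
  simp only [productDist, Fin.prod_univ_castSucc, Fin.snoc_castSucc, Fin.snoc_last]

lemma sum_productDist_snoc_mul_lidx (q : Fin m → ℝ) (r : ℝ) (φ : ℕ → ℝ) :
    ∑ z, productDist (Fin.snoc (α := fun _ => ℝ) q r) z * φ (lidx z) =
      (1 - r) * φ (m + 1) + r * ∑ z, productDist q z * φ (lidx z) := by
  simp only [sum_bool_snoc, productDist_snoc, lidx_snoc, if_true, Bool.false_eq_true, if_false,
    Finset.sum_add_distrib, ← Finset.sum_mul, sum_productDist, one_mul, Finset.mul_sum]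
  congr 1
  exact Finset.sum_congr rfl fun z _ => by ring

-- Multiplying by the total mass of `a` instead of normalizing `a` lets the induction pass through
-- initial segments of mass zero.
theorem exists_productDist_sum_mul_lidx {a : ℕ → ℝ} (ha : ∀ l, 0 ≤ a l) (m : ℕ) :
    ∃ q : Fin m → ℝ, (∀ j, q j ∈ Set.Icc (0 : ℝ) 1) ∧ ∀ φ : ℕ → ℝ,
      (∑ l ∈ Finset.range (m + 1), a l) * ∑ z, productDist q z * φ (lidx z) =
        ∑ l ∈ Finset.range (m + 1), a l * φ l := by
  induction m with
  | zero => exact ⟨0, nofun, fun φ => by simp [productDist, lidx]⟩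
  | succ m ih =>
    obtain ⟨q, hq, hlaw⟩ := ih
    simp only [Finset.sum_range_succ _ (m + 1)]
    set S := ∑ l ∈ Finset.range (m + 1), a l
    have hS : 0 ≤ S := Finset.sum_nonneg fun l _ => ha l
    have hSa : 0 ≤ S + a (m + 1) := add_nonneg hS (ha _)
    have hratio : S / (S + a (m + 1)) * (S + a (m + 1)) = S :=
      div_mul_cancel_of_imp fun h => by linarith [ha (m + 1)]
    refine ⟨Fin.snoc (α := fun _ => ℝ) q (S / (S + a (m + 1))), fun j => ?_, fun φ => ?_⟩
    · cases j using Fin.lastCases with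
      | last =>
        rw [Fin.snoc_last]
        exact ⟨div_nonneg hS hSa, div_le_one_of_le₀ (by linarith [ha (m + 1)]) hSa⟩
      | cast j => simpa only [Fin.snoc_castSucc] using hq j
    · rw [sum_productDist_snoc_mul_lidx, ← hlaw φ]
      linear_combination (∑ z, productDist q z * φ (lidx z) - φ (m + 1)) * hratio

lemma exists_sum_range_mul_comp_eq {α : Type*} [Fintype α] {g : ℕ → α} {p : α → ℝ}
    (hg : Set.SurjOn g (Set.Iic m) Set.univ) (hp : ∀ x, 0 ≤ p x) :
    ∃ a : ℕ → ℝ, (∀ l, 0 ≤ a l) ∧ ∀ φ : α → ℝ,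
      ∑ l ∈ Finset.range (m + 1), a l * φ (g l) = ∑ x, p x * φ x := by
  choose h hm hgh using fun x => hg (Set.mem_univ x)
  refine ⟨fun l => ∑ x with h x = l, p x, fun l => Finset.sum_nonneg fun x _ => hp x, fun φ => ?_⟩
  rw [← Finset.sum_fiberwise_of_maps_to (t := Finset.range (m + 1)) (g := h)
    fun x _ => Finset.mem_range_succ_iff.2 (hm x)]
  refine Finset.sum_congr rfl fun l _ => ?_
  rw [Finset.sum_mul]
  refine Finset.sum_congr rfl fun x hx => ?_
  rw [← (Finset.mem_filter.1 hx).2, hgh]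

theorem image_mix_deltaAt_lidx_eq_simplex {g : ℕ → Fin n → Bool}
    (hg : Set.SurjOn g (Set.Iic m) Set.univ) :
    (fun p => mix p fun z => deltaAt (g (lidx z))) '' closure (Eset m) = simplex n := by
  rw [closure_Eset]
  apply Set.Subset.antisymm
  · rintro _ ⟨_, ⟨q, hq, rfl⟩, rfl⟩
    exact mix_mem_simplex (productDist_mem_simplex fun j => hq j trivial)
      (deltaAt_comp_mem_markovKernels _)
  · rintro p ⟨hp_nonneg, hp_sum⟩
    obtain ⟨a, ha, ha_sum⟩ := exists_sum_range_mul_comp_eq hg hp_nonneg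
    have ha_total : ∑ l ∈ Finset.range (m + 1), a l = 1 := by
      simpa [hp_sum] using ha_sum 1
    obtain ⟨q, hq, hlaw⟩ := exists_productDist_sum_mul_lidx ha m
    refine ⟨_, ⟨q, fun j _ => hq j, rfl⟩, funext fun x => ?_⟩
    calc ∑ z, productDist q z * deltaAt (g (lidx z)) x
        = ∑ l ∈ Finset.range (m + 1), a l * deltaAt (g l) x := by
          rw [← hlaw fun l => deltaAt (g l) x, ha_total, one_mul]
      _ = ∑ y, p y * deltaAt y x := ha_sum fun y => deltaAt y x
      _ = p x := by simp [deltaAt]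

end LastNonzeroBit

lemma surjOn_binVec (n : ℕ) : Set.SurjOn (binVec n) (Set.Iio (2 ^ n)) Set.univ :=
  fun x _ => ⟨Nat.ofBits x, Nat.ofBits_lt_two_pow x,
    funext fun i => Nat.testBit_ofBits_lt x i i.isLt⟩

/-- Proposition (no inputs, fixed second layer): for `n ≥ 2` and `m ≥ 2^n - 1` there is
`R` in the closure of `F_{m,n}` with `{p^⊤R : p ∈ closure E_m} = Δ_n`. -/
theorem universal_approximation_distributions_fixed_second_layer
    (n m : ℕ) (hn : 2 ≤ n) (hm : 2 ^ n - 1 ≤ m) :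
    ∃ R ∈ closure (Fset m n),
      (fun p => mix p R) '' closure (Eset m) = simplex n := by
  have hsurj : Set.SurjOn (binVec n) (Set.Iic m) Set.univ :=
    (surjOn_binVec n).mono (fun l (hl : l < 2 ^ n) => show l ≤ m by omega) subset_rfl
  exact ⟨fun z => deltaAt (binVec n (lidx z)),
    deltaAt_comp_mem_closure_Fset fun j => isLinearThreshold_comp_lidx fun l => binVec n l j,
    image_mix_deltaAt_lidx_eq_simplex hsurj⟩
end

section
/- Let k ≥ 1 and n ≥ 1. If the closure of F_{k,m,n} = { R∘Q : Q ∈ F_{k,m}, R ∈ F_{m,n} } equals Δ_{k,n}, then m ≥ ⌈(2^k(2^n − 1) − n)/(n+k+1)⌉. -/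
open Finset

/-!
A network with one hidden layer depends on `m * (k + 1) + n * (m + 1)` weights and biases `θ p`, and
each entry of its kernel is a rational function of the numbers `exp (-θ p)` whose denominator never
vanishes. A Markov kernel has `2 ^ k * (2 ^ n - 1)` free entries. If there were more free entries
than parameters, then the free entries of the network kernels would satisfy a nontrivial polynomial
relation, by counting transcendence degrees. The relation would persist on the closure, but the free
entries of Markov kernels cover a box, on which no nonzero polynomial vanishes.
-/

open MvPolynomial

section DivisionClosure

variable (R : Type*) {ι κ A : Type*} [CommRing R] [CommRing A] [Algebra R A]

/-- The polynomials whose value at the family `e` is invertible; they are the denominators allowed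
in rational expressions in `e`. -/
noncomputable def unitDenominators (e : ι → A) : Submonoid (MvPolynomial ι R) :=
  (IsUnit.submonoid A).comap (aeval (R := R) e)

/-- Evaluation at the family `e` of the fractions with denominator in `unitDenominators R e`. -/
noncomputable def evalFraction (e : ι → A) : Localization (unitDenominators R e) →ₐ[R] A :=
  IsLocalization.liftAlgHom (M := unitDenominators R e) (f := aeval (R := R) e) fun q ↦ q.2

/-- The division closure of the family `e` in `A`: the smallest subalgebra that contains `e` and is
closed under those inverses that exist in `A`. It is encoded as the set of values at `e` of
fractions of polynomials. -/
noncomputable def divisionClosure (e : ι → A) : Subalgebra R A :=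
  (evalFraction R e).range

variable {R} {e : ι → A}

lemma mem_divisionClosure_iff {a : A} :
    a ∈ divisionClosure R e ↔
      ∃ p q : MvPolynomial ι R, IsUnit (aeval e q) ∧ a * aeval e q = aeval e p := by
  have evalFraction_mk' (p : MvPolynomial ι R) (q : unitDenominators R e) :
      evalFraction R e (IsLocalization.mk' _ p q) = a ↔ a * aeval e q.1 = aeval e p := by
    rw [mul_comm, eq_comm (b := aeval e p)]
    exact IsLocalization.lift_mk'_spec ..
  constructor
  · rintro ⟨r, hr⟩
    obtain ⟨p, q, rfl⟩ := IsLocalization.exists_mk'_eq (unitDenominators R e) r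
    exact ⟨p, q, q.2, (evalFraction_mk' p q).1 hr⟩
  · rintro ⟨p, q, hq, h⟩
    exact ⟨IsLocalization.mk' _ p ⟨q, hq⟩, (evalFraction_mk' p ⟨q, hq⟩).2 h⟩

lemma apply_mem_divisionClosure (i : ι) : e i ∈ divisionClosure R e :=
  mem_divisionClosure_iff.2 ⟨X i, 1, by simp, by simp⟩

lemma mem_divisionClosure_of_mul_eq_one {a b : A} (ha : a ∈ divisionClosure R e)
    (hab : a * b = 1) : b ∈ divisionClosure R e := by
  obtain ⟨p, q, hq, hpq⟩ := mem_divisionClosure_iff.1 ha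
  refine mem_divisionClosure_iff.2 ⟨q, p, ?_, ?_⟩
  · exact hpq ▸ (IsUnit.of_mul_eq_one b hab).mul hq
  · rw [← hpq, ← mul_assoc, mul_comm b, hab, one_mul]

lemma unitDenominators_le_nonZeroDivisors [IsDomain R] [Nontrivial A] (e : ι → A) :
    unitDenominators R e ≤ nonZeroDivisors (MvPolynomial ι R) := by
  refine le_nonZeroDivisors_of_noZeroDivisors fun zero_mem ↦ ?_
  have isUnit_zero : IsUnit (aeval (R := R) e 0) := zero_mem
  rw [map_zero] at isUnit_zero
  exact not_isUnit_zero isUnit_zero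

lemma trdeg_localization_mvPolynomial [IsDomain R] [Fintype ι] {M : Submonoid (MvPolynomial ι R)}
    (hM : M ≤ nonZeroDivisors (MvPolynomial ι R)) :
    Algebra.trdeg R (Localization M) = Fintype.card ι := by
  have : IsDomain (Localization M) := IsLocalization.isDomain_localization hM
  have : Algebra.IsAlgebraic (MvPolynomial ι R) (Localization M) := IsLocalization.isAlgebraic _ M
  have : FaithfulSMul (MvPolynomial ι R) (Localization M) :=
    (faithfulSMul_iff_algebraMap_injective _ _).2 (IsLocalization.injective _ hM)
  have basis := (IsTranscendenceBasis.mvPolynomial ι R).algebraMap_comp (A := Localization M)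
  simpa using basis.lift_cardinalMk_eq_trdeg.symm

lemma trdeg_divisionClosure_le [IsDomain R] [Nontrivial A] [Fintype ι] (e : ι → A) :
    Algebra.trdeg R (divisionClosure R e) ≤ Fintype.card ι := by
  let φ : Localization (unitDenominators R e) →ₐ[R] divisionClosure R e :=
    (evalFraction R e).rangeRestrict
  have h := lift_trdeg_le_of_surjective φ (evalFraction R e).rangeRestrict_surjective
  rw [trdeg_localization_mvPolynomial (unitDenominators_le_nonZeroDivisors e)] at h
  simpa using h

lemma card_le_of_algebraicIndependent_of_mem_divisionClosure [IsDomain R] [Nontrivial A]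
    [Fintype ι] [Fintype κ] {g : κ → A} (hg : ∀ j, g j ∈ divisionClosure R e)
    (hind : AlgebraicIndependent R g) : Fintype.card κ ≤ Fintype.card ι := by
  have hind' : AlgebraicIndependent R fun j ↦ (⟨g j, hg j⟩ : divisionClosure R e) :=
    .of_comp (divisionClosure R e).val hind
  have h := hind'.lift_cardinalMk_le_trdeg.trans
    (Cardinal.lift_le.2 (trdeg_divisionClosure_le e))
  simpa using h

end DivisionClosure

section ClosureOfRange

variable {R ι κ T : Type*} [CommRing R] [IsDomain R] [TopologicalSpace R] [IsTopologicalRing R]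
  [T1Space R] {Φ : T → κ → R} {s : κ → Set R}

lemma algebraicIndependent_of_pi_subset_closure_range (hs : ∀ j, (s j).Infinite)
    (hΦ : Set.univ.pi s ⊆ closure (Set.range Φ)) :
    AlgebraicIndependent R fun j t ↦ Φ t j := by
  rw [algebraicIndependent_iff]
  intro f hf
  have vanishes_on_range : Set.range Φ ⊆ {x | eval x f = 0} := by
    rintro _ ⟨t, rfl⟩
    have h := congrArg (Pi.evalAlgHom R (fun _ : T ↦ R) t) hf
    rwa [comp_aeval_apply, aeval_eq_eval, map_zero] at h
  have isClosed_zeros : IsClosed {x | eval x f = 0} :=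
    isClosed_singleton.preimage (continuous_eval f)
  refine funext_set s hs fun x hx ↦ ?_
  rw [map_zero]
  exact closure_minimal vanishes_on_range isClosed_zeros (hΦ hx)

lemma card_le_of_pi_subset_closure_range [Fintype ι] [Fintype κ] {e : ι → T → R}
    (he : ∀ j, (fun t ↦ Φ t j) ∈ divisionClosure R e) (hs : ∀ j, (s j).Infinite)
    (hΦ : Set.univ.pi s ⊆ closure (Set.range Φ)) : Fintype.card κ ≤ Fintype.card ι := by
  have : Nonempty T := Set.range_nonempty_iff_nonempty.1 <| closure_nonempty_iff.1 <|
    (Set.univ_pi_nonempty_iff.2 fun j ↦ (hs j).nonempty).mono hΦ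
  exact card_le_of_algebraicIndependent_of_mem_divisionClosure he
    (algebraicIndependent_of_pi_subset_closure_range hs hΦ)

end ClosureOfRange

section SigmoidNetwork

variable {ι T : Type*} {e : ι → T → ℝ} {k m n : ℕ}

lemma sigmoid_mem_divisionClosure {a : T → ℝ}
    (ha : (fun t ↦ Real.exp (-a t)) ∈ divisionClosure ℝ e) :
    (fun t ↦ sigmoid (a t)) ∈ divisionClosure ℝ e := by
  refine mem_divisionClosure_of_mul_eq_one (add_mem (one_mem _) ha) (funext fun t ↦ ?_)
  exact mul_one_div_cancel (by positivity : 1 + Real.exp (-a t) ≠ 0)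

lemma exp_neg_sum_mul_bval_add (v : Fin k → ℝ) (c : ℝ) (y : Fin k → Bool) :
    Real.exp (-((∑ i, v i * bval (y i)) + c)) =
      (∏ i, if y i then Real.exp (-v i) else 1) * Real.exp (-c) := by
  rw [neg_add, Real.exp_add, ← sum_neg_distrib, Real.exp_sum]
  congr 1
  refine prod_congr rfl fun i _ ↦ ?_
  cases y i <;> simp [bval]

/-- The kernel of a layer of `m` sigmoid units with `k` inputs, where `θ (j, some i)` is the weight
of input `i` in unit `j` and `θ (j, none)` is the bias of unit `j`. -/
noncomputable def layerKernel (θ : Fin m × Option (Fin k) → ℝ) (y : Fin k → Bool)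
    (z : Fin m → Bool) : ℝ :=
  ∏ j, if z j then sigmoid ((∑ i, θ (j, some i) * bval (y i)) + θ (j, none))
    else 1 - sigmoid ((∑ i, θ (j, some i) * bval (y i)) + θ (j, none))

lemma range_layerKernel : Set.range (layerKernel (k := k) (m := m)) = Fset k m := by
  ext P
  constructor
  · rintro ⟨θ, rfl⟩
    exact ⟨fun j i ↦ θ (j, some i), fun j ↦ θ (j, none), fun _ _ ↦ rfl⟩
  · rintro ⟨V, c, hP⟩
    exact ⟨fun p ↦ p.2.elim (c p.1) (V p.1), funext₂ fun y z ↦ (hP y z).symm⟩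

lemma layerKernel_mem_divisionClosure {θ : T → Fin m × Option (Fin k) → ℝ}
    (hθ : ∀ p, (fun t ↦ Real.exp (-θ t p)) ∈ divisionClosure ℝ e)
    (y : Fin k → Bool) (z : Fin m → Bool) :
    (fun t ↦ layerKernel (θ t) y z) ∈ divisionClosure ℝ e := by
  have unit_mem (j : Fin m) :
      (fun t ↦ sigmoid ((∑ i, θ t (j, some i) * bval (y i)) + θ t (j, none))) ∈
        divisionClosure ℝ e := by
    refine sigmoid_mem_divisionClosure ?_
    simp only [exp_neg_sum_mul_bval_add]
    refine mul_mem ?_ (hθ (j, none))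
    simp only [← Finset.prod_fn]
    refine prod_mem fun i _ ↦ ?_
    split
    exacts [hθ (j, some i), one_mem _]
  simp only [layerKernel, ← Finset.prod_fn]
  refine prod_mem fun j _ ↦ ?_
  split
  exacts [unit_mem j, sub_mem (one_mem _) (unit_mem j)]

/-- The weights and biases of the hidden layer and of the output layer, each layer indexed as in
`layerKernel`. -/
abbrev NetworkParam (k m n : ℕ) : Type :=
  (Fin m × Option (Fin k)) ⊕ (Fin n × Option (Fin m))

/-- The kernel of the network with one hidden layer and parameters `θ`. -/
noncomputable def networkKernel (θ : NetworkParam k m n → ℝ) :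
    (Fin k → Bool) → (Fin n → Bool) → ℝ :=
  kcomp (layerKernel (θ ∘ Sum.inr)) (layerKernel (θ ∘ Sum.inl))

lemma range_networkKernel :
    Set.range (networkKernel (k := k) (m := m) (n := n)) =
      {P | ∃ Q ∈ Fset k m, ∃ R ∈ Fset m n, P = kcomp R Q} := by
  simp only [← range_layerKernel, Set.exists_range_iff]
  ext P
  constructor
  · rintro ⟨θ, rfl⟩
    exact ⟨θ ∘ Sum.inl, θ ∘ Sum.inr, rfl⟩
  · rintro ⟨θ₁, θ₂, rfl⟩
    exact ⟨Sum.elim θ₁ θ₂, rfl⟩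

lemma networkKernel_mem_divisionClosure (y : Fin k → Bool) (x : Fin n → Bool) :
    (fun θ : NetworkParam k m n → ℝ ↦ networkKernel θ y x) ∈
      divisionClosure ℝ fun p θ ↦ Real.exp (-θ p) := by
  simp only [networkKernel, kcomp, ← Finset.sum_fn]
  exact sum_mem fun z _ ↦ mul_mem
    (layerKernel_mem_divisionClosure (fun p ↦ apply_mem_divisionClosure (Sum.inl p)) y z)
    (layerKernel_mem_divisionClosure (fun p ↦ apply_mem_divisionClosure (Sum.inr p)) z x)

lemma card_networkParam : Fintype.card (NetworkParam k m n) = m * (k + 1) + n * (m + 1) := by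
  simp

end SigmoidNetwork

section FreeEntries

section CompleteToSumOne

variable {β : Type*} [Fintype β] [DecidableEq β] {b₀ : β} {u : {b // b ≠ b₀} → ℝ}

/-- The extension of `u` to all of `β` for which the values sum to one. -/
def completeToSumOne (u : {b // b ≠ b₀} → ℝ) (b : β) : ℝ :=
  if h : b ≠ b₀ then u ⟨b, h⟩ else 1 - ∑ b', u b'

lemma completeToSumOne_coe (u : {b // b ≠ b₀} → ℝ) (b : {b // b ≠ b₀}) :
    completeToSumOne u b = u b :=
  dif_pos b.2

lemma completeToSumOne_self (u : {b // b ≠ b₀} → ℝ) :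
    completeToSumOne u b₀ = 1 - ∑ b, u b :=
  dif_neg (not_not.2 rfl)

lemma sum_completeToSumOne (u : {b // b ≠ b₀} → ℝ) : ∑ b, completeToSumOne u b = 1 := by
  rw [Fintype.sum_eq_add_sum_subtype_ne _ b₀, completeToSumOne_self]
  simp only [completeToSumOne_coe, sub_add_cancel]

lemma sum_le_one_of_le_inv_card (hu : ∀ b, u b ≤ (Fintype.card β : ℝ)⁻¹) : ∑ b, u b ≤ 1 := by
  have : Nonempty β := ⟨b₀⟩
  calc ∑ b, u b ≤ ∑ _b : {b // b ≠ b₀}, (Fintype.card β : ℝ)⁻¹ := sum_le_sum fun b _ ↦ hu b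
    _ = Fintype.card {b // b ≠ b₀} * (Fintype.card β : ℝ)⁻¹ := by simp
    _ ≤ Fintype.card β * (Fintype.card β : ℝ)⁻¹ := by
        gcongr
        exact Fintype.card_subtype_le _
    _ = 1 := mul_inv_cancel₀ (by simp)

lemma completeToSumOne_nonneg (hu : ∀ b, u b ∈ Set.Icc 0 (Fintype.card β : ℝ)⁻¹) (b : β) :
    0 ≤ completeToSumOne u b := by
  obtain rfl | hb := eq_or_ne b b₀
  · rw [completeToSumOne_self, sub_nonneg]
    exact sum_le_one_of_le_inv_card fun b ↦ (hu b).2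
  · exact (hu ⟨b, hb⟩).1.trans_eq (completeToSumOne_coe u ⟨b, hb⟩).symm

end CompleteToSumOne

variable {k n : ℕ}

/-- The positions of the entries of a Markov kernel other than those in the column of the zero
vector, which are determined by the others. -/
abbrev FreeEntry (k n : ℕ) : Type :=
  (Fin k → Bool) × {x : Fin n → Bool // x ≠ fun _ ↦ false}

/-- The entries of a kernel at the positions in `FreeEntry k n`. -/
def freeEntries (P : (Fin k → Bool) → (Fin n → Bool) → ℝ) (i : FreeEntry k n) : ℝ :=
  P i.1 i.2

lemma continuous_freeEntries : Continuous (freeEntries (k := k) (n := n)) := by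
  unfold freeEntries
  fun_prop

lemma pi_Icc_subset_image_freeEntries :
    Set.univ.pi (fun _ ↦ Set.Icc 0 (Fintype.card (Fin n → Bool) : ℝ)⁻¹) ⊆
      freeEntries '' markovKernels k n := by
  intro u hu
  refine ⟨fun y ↦ completeToSumOne fun x ↦ u (y, x), ⟨fun y ↦ ?_, fun y ↦ ?_⟩, ?_⟩
  · exact completeToSumOne_nonneg fun x ↦ hu (y, x) trivial
  · exact sum_completeToSumOne _
  · exact funext fun i ↦ completeToSumOne_coe _ i.2

lemma card_freeEntry : Fintype.card (FreeEntry k n) = 2 ^ k * (2 ^ n - 1) := by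
  simp [Fintype.card_subtype_compl]

end FreeEntries

lemma card_freeEntry_le_card_networkParam {k m n : ℕ}
    (h : markovKernels k n ⊆ closure (Set.range (networkKernel (k := k) (m := m) (n := n)))) :
    Fintype.card (FreeEntry k n) ≤ Fintype.card (NetworkParam k m n) := by
  have box_subset : Set.univ.pi (fun _ ↦ Set.Icc 0 (Fintype.card (Fin n → Bool) : ℝ)⁻¹) ⊆
      closure (Set.range fun θ : NetworkParam k m n → ℝ ↦ freeEntries (networkKernel θ)) :=
    calc _ ⊆ freeEntries '' markovKernels k n := pi_Icc_subset_image_freeEntries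
      _ ⊆ freeEntries '' closure (Set.range networkKernel) := Set.image_mono h
      _ ⊆ closure (freeEntries '' Set.range networkKernel) :=
          image_closure_subset_closure_image continuous_freeEntries
      _ = _ := by rw [← Set.range_comp]; rfl
  have Icc_infinite : (Set.Icc 0 (Fintype.card (Fin n → Bool) : ℝ)⁻¹).Infinite :=
    Set.Icc_infinite (by positivity)
  have entry_mem (i : FreeEntry k n) :
      (fun θ : NetworkParam k m n → ℝ ↦ freeEntries (networkKernel θ) i) ∈
        divisionClosure ℝ fun p θ ↦ Real.exp (-θ p) := by
    simp only [freeEntries, networkKernel_mem_divisionClosure]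
  exact card_le_of_pi_subset_closure_range entry_mem (fun _ ↦ Icc_infinite) box_subset

/-- Proposition 3, second part (lower bound, all weights free): if the closure of
`F_{k,m,n}` equals `Δ_{k,n}`, then `m ≥ ⌈(2^k (2^n - 1) - n) / (n+k+1)⌉`. -/
theorem lower_bound_feedforward
    (k n m : ℕ) (hk : 1 ≤ k) (hn : 1 ≤ n)
    (h : closure {P | ∃ Q ∈ Fset k m, ∃ R ∈ Fset m n, P = kcomp R Q} = markovKernels k n) :
    ⌈(2 ^ k * (2 ^ n - 1) - n : ℝ) / (n + k + 1)⌉₊ ≤ m := by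
  rw [← range_networkKernel] at h
  have card_le := card_freeEntry_le_card_networkParam h.ge
  rw [card_freeEntry, card_networkParam, ← Nat.cast_le (α := ℝ)] at card_le
  push_cast [Nat.one_le_two_pow] at card_le
  rw [Nat.ceil_le, div_le_iff₀ (by positivity)]
  linarith
end
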